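/- Let Σ be a first-order signature. A class 𝒦 of Σ-structures is axiomatized by a set of basic Horn formulas if and only if 𝒦 is closed under isomorphisms, substructures, and reduced products. -/

import Mathlib

/-!
Common definitions: products, reduced products, basic Horn formulas,
bundled structures, diagrams, units.
-/

namespace ZFHorn

open FirstOrder Language Structure Filter Set

universe u v w u' v' w'

variable {L : FirstOrder.Language.{v, w}}

/-- The direct product structure on a dependent function type. -/
instance piStructure {ι : Type*} (M : ι → Type*) [∀ i, L.Structure (M i)] :
    L.Structure (∀ i, M i) where
  funMap f x i := funMap f fun k => x k i
  RelMap r x := ∀ i, RelMap r fun k => x k i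

/-- The reduced-product prestructure on `∀ i, M i` modulo a filter `F`:
functions act coordinatewise, and a relation holds precisely when it holds on a
set of coordinates belonging to `F`. -/
instance reducedProductPrestructure {ι : Type*} (F : Filter ι) (M : ι → Type*)
    [∀ i, L.Structure (M i)] : L.Prestructure (F.productSetoid M) :=
  { toStructure :=
      { funMap := fun {_} f x i => funMap f fun k => x k i
        RelMap := fun {_} r x => ∀ᶠ i in F, RelMap r fun k => x k i }
    fun_equiv := fun {n} f x y xy => by
      refine mem_of_superset (iInter_mem.2 xy) fun i hi => ?_
      simp only [Set.mem_iInter, Set.mem_setOf_eq] at hi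
      simp only [Set.mem_setOf_eq, hi]
    rel_equiv := fun {n} r x y xy => by
      rw [← iff_eq_eq]
      constructor
      · intro hx
        refine mem_of_superset (inter_mem hx (iInter_mem.2 xy)) ?_
        rintro i ⟨h1, h2⟩
        simp only [Set.mem_iInter, Set.mem_setOf_eq] at *
        rw [← funext h2]
        exact h1
      · intro hy
        refine mem_of_superset (inter_mem hy (iInter_mem.2 xy)) ?_
        rintro i ⟨h1, h2⟩
        simp only [Set.mem_iInter, Set.mem_setOf_eq] at *
        rw [funext h2]
        exact h1 }

/-- The reduced product `∏_F M i` of a family of structures modulo a filter,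
as a first-order structure. -/
instance reducedProductStructure {ι : Type*} (F : Filter ι) (M : ι → Type*)
    [∀ i, L.Structure (M i)] : L.Structure (F.Product M) :=
  Language.quotientStructure

instance productNonempty {ι : Type*} (F : Filter ι) (M : ι → Type*)
    [∀ i, Nonempty (M i)] : Nonempty (F.Product M) :=
  ⟨(↑(fun i => Classical.arbitrary (M i)) : F.Product M)⟩

section Horn

variable {α : Type u'}

/-- `orList φ [ψ₁, …, ψₖ]` is the disjunction `φ ∨ ψ₁ ∨ ⋯ ∨ ψₖ`. -/
def orList : L.Formula α → List (L.Formula α) → L.Formula α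
  | φ, [] => φ
  | φ, ψ :: l => φ ⊔ orList ψ l

/-- A list of formulas is a Horn list if each member is atomic or the negation of
an atomic formula, and at most one member is atomic. -/
def IsHornList (l : List (L.Formula α)) : Prop :=
  (∀ χ ∈ l, BoundedFormula.IsAtomic χ ∨
      ∃ θ : L.Formula α, BoundedFormula.IsAtomic θ ∧ χ = θ.not) ∧
    ∀ i j : Fin l.length,
      BoundedFormula.IsAtomic (l.get i) → BoundedFormula.IsAtomic (l.get j) → i = j

/-- A basic Horn formula is a disjunction `φ₀ ∨ ⋯ ∨ φₙ` in which at most one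
disjunct is atomic, the rest being negations of atomic formulas. -/
def IsBasicHorn (φ : L.Formula α) : Prop :=
  ∃ (ψ : L.Formula α) (l : List (L.Formula α)), φ = orList ψ l ∧ IsHornList (ψ :: l)

/-- A strict basic Horn formula (quasi-identity) is a basic Horn formula in which
at least one disjunct is atomic. -/
def IsQuasiIdentity (φ : L.Formula α) : Prop :=
  ∃ (ψ : L.Formula α) (l : List (L.Formula α)), φ = orList ψ l ∧ IsHornList (ψ :: l) ∧
    ∃ χ ∈ ψ :: l, BoundedFormula.IsAtomic χ

end Horn

/-- `SatAll M φ` means that every assignment of the free variables satisfies `φ` in `M`. -/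
def SatAll (M : Type u') [L.Structure M] {α : Type v'} (φ : L.Formula α) : Prop :=
  ∀ v : α → M, φ.Realize v

/-- A unit is a one-element structure in which every relation holds. -/
def IsUnit (L : FirstOrder.Language.{v, w}) (M : Type u') [L.Structure M] : Prop :=
  (∃ a : M, ∀ b : M, b = a) ∧
    ∀ (n : ℕ) (r : L.Relations n) (x : Fin n → M), RelMap r x

/-- A bundled nonempty `L`-structure. -/
structure SStruct (L : FirstOrder.Language.{v, w}) : Type (max (u + 1) v w) where
  /-- the underlying type -/
  carrier : Type u
  /-- the structure on the underlying type -/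
  struc : L.Structure carrier
  /-- the underlying type is nonempty -/
  nonempty : Nonempty carrier

attribute [instance] SStruct.struc SStruct.nonempty

instance : CoeSort (SStruct.{u} L) (Type u) :=
  ⟨SStruct.carrier⟩

/-- Bundle a nonempty structure. -/
def SStruct.of (M : Type u) [i : L.Structure M] [h : Nonempty M] : SStruct.{u} L :=
  ⟨M, i, h⟩

variable (L)

/-- A class of structures is closed under isomorphisms. -/
def ClosedUnderIso (K : Set (SStruct.{u} L)) : Prop :=
  ∀ M ∈ K, ∀ N : SStruct.{u} L, Nonempty ((M : Type u) ≃[L] (N : Type u)) → N ∈ K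

/-- A class of structures is closed under (nonempty) substructures. -/
def ClosedUnderSubstructures (K : Set (SStruct.{u} L)) : Prop :=
  ∀ M ∈ K, ∀ (S : L.Substructure (M : Type u)) (h : Nonempty S),
    (⟨S, inferInstance, h⟩ : SStruct.{u} L) ∈ K

/-- A class of structures is closed under reduced products (modulo proper filters). -/
def ClosedUnderReducedProducts (K : Set (SStruct.{u} L)) : Prop :=
  ∀ (ι : Type u) (F : Filter ι), F.NeBot → ∀ B : ι → SStruct.{u} L, (∀ i, B i ∈ K) →
    (⟨F.Product fun i => (B i : Type u), inferInstance, inferInstance⟩ : SStruct.{u} L) ∈ K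

/-- A class of structures is closed under homomorphic images. -/
def ClosedUnderHomImages (K : Set (SStruct.{u} L)) : Prop :=
  ∀ M ∈ K, ∀ (N : SStruct.{u} L) (f : (M : Type u) →[L] (N : Type u)),
    Function.Surjective f → N ∈ K

/-- A class of structures is closed under direct products. -/
def ClosedUnderProducts (K : Set (SStruct.{u} L)) : Prop :=
  ∀ (ι : Type u) (B : ι → SStruct.{u} L), (∀ i, B i ∈ K) →
    (⟨∀ i, (B i : Type u), inferInstance, inferInstance⟩ : SStruct.{u} L) ∈ K

/-- A class of structures is axiomatized by a set of formulas `Γ` if it consists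
exactly of those structures satisfying every formula of `Γ`. -/
def AxiomatizedBy (K : Set (SStruct.{u} L)) (Γ : Set (L.Formula ℕ)) : Prop :=
  ∀ M : SStruct.{u} L, M ∈ K ↔ ∀ φ ∈ Γ, SatAll (M : Type u) φ

/-- The positive diagram of `A`: all atomic `Σ(A)`-sentences true in `A`. -/
def DiagPlus (A : Type u') [L.Structure A] : Set ((L[[A]]).Sentence) :=
  {φ | BoundedFormula.IsAtomic φ ∧ A ⊨ φ}

/-- The negative diagram of `A`: all negated atomic `Σ(A)`-sentences true in `A`. -/
def DiagMinus (A : Type u') [L.Structure A] : Set ((L[[A]]).Sentence) :=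
  {φ | ∃ ψ : (L[[A]]).Sentence, BoundedFormula.IsAtomic ψ ∧ φ = ψ.not ∧ A ⊨ φ}

/-- The diagram of `A`. -/
def Diag (A : Type u') [L.Structure A] : Set ((L[[A]]).Sentence) :=
  DiagPlus L A ∪ DiagMinus L A

/-!
Soundness: a basic Horn formula is quantifier free, so it passes to substructures. In a reduced
product an atomic formula holds iff it holds almost everywhere, and a negated one iff it holds
frequently. Hence if some disjunct holds almost everywhere, then either one of the finitely many
negated disjuncts holds frequently, or the unique atomic one holds almost everywhere.

Completeness: let `A` satisfy every basic Horn formula valid in `K`. For atomic `φ₁, …, φₙ` true in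
`A` at the identity assignment and a literal `ψ` false there, the Horn formula
`ψ ∨ ¬φ₁ ∨ ⋯ ∨ ¬φₙ` fails in `A`; renaming its finitely many variables into `ℕ` shows that it fails
in some member of `K`. In the reduced product of these members over all pairs `({φ₁, …, φₙ}, ψ)`,
modulo the filter generated by the sets of pairs whose first component contains a given finite set,
the tuple of the failing assignments satisfies exactly the atomic formulas true in `A`, so it
embeds `A`.
-/

section BasicHorn

variable {L}

section HornFormula

variable {α : Type u'} {β : Type v'}

/-- A literal is an atomic formula or the negation of one: the disjuncts allowed in a basic Horn
formula. -/
def IsLiteral (χ : L.Formula α) : Prop :=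
  BoundedFormula.IsAtomic χ ∨ ∃ θ : L.Formula α, BoundedFormula.IsAtomic θ ∧ χ = θ.not

theorem not_isAtomic_not (θ : L.Formula α) : ¬ BoundedFormula.IsAtomic θ.not := nofun

theorem IsLiteral.isQF {χ : L.Formula α} (h : IsLiteral χ) : BoundedFormula.IsQF χ := by
  rcases h with h | ⟨θ, h, rfl⟩
  · exact h.isQF
  · exact h.isQF.not

theorem IsLiteral.relabel {χ : L.Formula α} (h : IsLiteral χ) (g : α → β) :
    IsLiteral (χ.relabel g) := by
  rcases h with h | ⟨θ, h, rfl⟩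
  · exact Or.inl (h.relabel _)
  · exact Or.inr ⟨θ.relabel g, h.relabel _, rfl⟩

theorem IsLiteral.isAtomic_of_relabel {χ : L.Formula α} (h : IsLiteral χ) {g : α → β}
    (hg : BoundedFormula.IsAtomic (χ.relabel g)) : BoundedFormula.IsAtomic χ := by
  rcases h with h | ⟨θ, -, rfl⟩
  · exact h
  · exact absurd hg (not_isAtomic_not (θ.relabel g))

theorem isHornList_iff_pairwise {l : List (L.Formula α)} :
    IsHornList l ↔ (∀ χ ∈ l, IsLiteral χ) ∧
      l.Pairwise fun χ χ' => BoundedFormula.IsAtomic χ → ¬ BoundedFormula.IsAtomic χ' := by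
  refine and_congr_right fun _ => ?_
  rw [List.pairwise_iff_get]
  constructor
  · exact fun h i j hij hi hj => hij.ne (h i j hi hj)
  · intro h i j hi hj
    rcases lt_trichotomy i j with hij | hij | hij
    · exact absurd hj (h i j hij hi)
    · exact hij
    · exact absurd hi (h j i hij hj)

theorem IsHornList.eq_of_isAtomic {l : List (L.Formula α)} (hl : IsHornList l)
    {χ χ' : L.Formula α} (hχl : χ ∈ l) (hχl' : χ' ∈ l) (hχ : BoundedFormula.IsAtomic χ)
    (hχ' : BoundedFormula.IsAtomic χ') : χ = χ' := by
  obtain ⟨i, rfl⟩ := List.get_of_mem hχl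
  obtain ⟨j, rfl⟩ := List.get_of_mem hχl'
  rw [hl.2 i j hχ hχ']

theorem IsHornList.relabel {l : List (L.Formula α)} (hl : IsHornList l) (g : α → β) :
    IsHornList (l.map (Formula.relabel g)) := by
  obtain ⟨hlit, hatomic⟩ := isHornList_iff_pairwise.1 hl
  refine isHornList_iff_pairwise.2 ⟨List.forall_mem_map.2 fun χ hχ => (hlit χ hχ).relabel g, ?_⟩
  rw [List.pairwise_map]
  exact hatomic.imp_of_mem fun hχ hχ' h hat hat' =>
    h ((hlit _ hχ).isAtomic_of_relabel hat) ((hlit _ hχ').isAtomic_of_relabel hat')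

theorem IsLiteral.isHornList_cons_map_not {ψ : L.Formula α} (hψ : IsLiteral ψ)
    {l : List (L.Formula α)} (hl : ∀ φ ∈ l, BoundedFormula.IsAtomic φ) :
    IsHornList (ψ :: l.map Formula.not) := by
  rw [isHornList_iff_pairwise, List.forall_mem_cons, List.forall_mem_map, List.pairwise_cons,
    List.forall_mem_map, List.pairwise_map]
  exact ⟨⟨hψ, fun φ hφ => Or.inr ⟨φ, hl φ hφ, rfl⟩⟩, fun φ _ _ => not_isAtomic_not φ,
    List.pairwise_of_forall fun φ _ h => absurd h (not_isAtomic_not φ)⟩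

theorem relabel_orList (g : α → β) (ψ : L.Formula α) (l : List (L.Formula α)) :
    (orList ψ l).relabel g = orList (ψ.relabel g) (l.map (Formula.relabel g)) := by
  induction l generalizing ψ with
  | nil => rfl
  | cons θ l ih => exact congrArg (ψ.relabel g ⊔ ·) (ih θ)

theorem isQF_orList {ψ : L.Formula α} {l : List (L.Formula α)}
    (h : ∀ χ ∈ ψ :: l, BoundedFormula.IsQF χ) : BoundedFormula.IsQF (orList ψ l) := by
  induction l generalizing ψ with
  | nil => exact h ψ List.mem_cons_self
  | cons θ l ih =>
    rw [List.forall_mem_cons] at h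
    exact h.1.sup (ih h.2)

theorem IsBasicHorn.isQF {φ : L.Formula α} (h : IsBasicHorn φ) : BoundedFormula.IsQF φ := by
  obtain ⟨ψ, l, rfl, hl⟩ := h
  exact isQF_orList fun χ hχ => IsLiteral.isQF (hl.1 χ hχ)

theorem IsBasicHorn.relabel {φ : L.Formula α} (h : IsBasicHorn φ) (g : α → β) :
    IsBasicHorn (φ.relabel g) := by
  obtain ⟨ψ, l, rfl, hl⟩ := h
  exact ⟨_, _, relabel_orList g ψ l, hl.relabel g⟩

end HornFormula

section Realization

variable {α : Type*} {M : Type*} [L.Structure M]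

theorem realize_orList {v : α → M} {ψ : L.Formula α} {l : List (L.Formula α)} :
    (orList ψ l).Realize v ↔ ∃ χ ∈ ψ :: l, χ.Realize v := by
  induction l generalizing ψ with
  | nil => simp [orList]
  | cons θ l ih => rw [orList, Formula.realize_sup, ih, List.exists_mem_cons_iff (a := ψ)]

theorem realize_orList_map_not {v : α → M} {ψ : L.Formula α} {l : List (L.Formula α)} :
    (orList ψ (l.map Formula.not)).Realize v ↔ ((∀ φ ∈ l, φ.Realize v) → ψ.Realize v) := by
  rw [realize_orList, List.exists_mem_cons_iff, or_iff_not_imp_right]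
  simp only [List.mem_map, exists_exists_and_eq_and, Formula.realize_not, not_exists, not_and,
    not_not]

theorem realize_congr_of_eqOn_freeVarFinset [DecidableEq α] {φ : L.Formula α} {v v' : α → M}
    (h : Set.EqOn v v' (BoundedFormula.freeVarFinset φ)) : φ.Realize v ↔ φ.Realize v' :=
  (BoundedFormula.realize_restrictFreeVar (f := Subtype.val) v fun _ => rfl).symm.trans
    (BoundedFormula.realize_restrictFreeVar (f := Subtype.val) v' fun a => h a.2)

theorem realize_embedding_comp_iff {N : Type*} [L.Structure N] {φ : L.Formula α}
    (hφ : BoundedFormula.IsQF φ) (e : N ↪[L] M) {v : α → N} :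
    φ.Realize (e ∘ v) ↔ φ.Realize v := by
  rw [Formula.Realize, ← Subsingleton.elim (e ∘ default) default]
  exact hφ.realize_embedding e

theorem SatAll.of_embedding {N : Type*} [L.Structure N] {φ : L.Formula α} (h : SatAll M φ)
    (hφ : BoundedFormula.IsQF φ) (e : N ↪[L] M) : SatAll N φ :=
  fun v => (realize_embedding_comp_iff hφ e).1 (h (e ∘ v))

theorem satAll_relabel_iff [Nonempty M] [DecidableEq α] {β : Type*} {φ : L.Formula α} {g : α → β}
    (hg : InjOn g (BoundedFormula.freeVarFinset φ)) : SatAll M (φ.relabel g) ↔ SatAll M φ := by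
  refine ⟨fun h v => ?_, fun h v => Formula.realize_relabel.2 (h (v ∘ g))⟩
  let V : Set α := BoundedFormula.freeVarFinset φ
  let w : β → M := Function.extend (V.domRestrict g) (V.domRestrict v) (Classical.arbitrary _)
  have hw : EqOn (w ∘ g) v V := fun a ha => hg.injective.extend_apply _ _ ⟨a, ha⟩
  exact (realize_congr_of_eqOn_freeVarFinset hw).1 (Formula.realize_relabel.1 (h w))

end Realization

section ReducedProduct

variable {ι : Type*} {F : Filter ι} {M : ι → Type*} [∀ i, L.Structure (M i)] {β : Type*}

theorem realize_term_reducedProduct (x : β → ∀ i, M i) (t : L.Term β) :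
    t.realize (fun b => (x b : F.Product M)) =
      ((fun i => t.realize fun b => x b i : ∀ i, M i) : F.Product M) := by
  induction t with
  | var => rfl
  | func f ts ih =>
    simp only [Term.realize, ih]
    exact funMap_quotient_mk' (F.productSetoid M) f _

theorem realize_reducedProduct_iff_eventually {φ : L.Formula β} (hφ : BoundedFormula.IsAtomic φ)
    (x : β → ∀ i, M i) :
    φ.Realize (fun b => (x b : F.Product M)) ↔ ∀ᶠ i in F, φ.Realize fun b => x b i := by
  have realize_term (t : L.Term (β ⊕ Fin 0)) :
      t.realize (Sum.elim (fun b => (x b : F.Product M)) default) =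
        ((fun i => t.realize (Sum.elim (fun b => x b i) default) : ∀ i, M i) : F.Product M) := by
    convert! realize_term_reducedProduct (F := F) (Sum.elim x fun k => k.elim0) t using 2
    · exact funext (Sum.rec (fun _ => rfl) fun k => k.elim0)
    · ext i
      congr 1
      exact funext (Sum.rec (fun _ => rfl) fun k => k.elim0)
  cases hφ with
  | equal t₁ t₂ =>
    simp only [Formula.Realize, BoundedFormula.realize_bdEqual, realize_term]
    exact Quotient.eq''
  | rel R ts =>
    simp only [Formula.Realize, BoundedFormula.realize_rel, realize_term]
    exact relMap_quotient_mk' (F.productSetoid M) R _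

theorem IsLiteral.realize_reducedProduct_of_frequently {χ : L.Formula β} (hχ : IsLiteral χ)
    (hatomic : ¬ BoundedFormula.IsAtomic χ) {x : β → ∀ i, M i}
    (h : ∃ᶠ i in F, χ.Realize fun b => x b i) :
    χ.Realize fun b => (x b : F.Product M) := by
  obtain ⟨θ, hθ, rfl⟩ := hχ.resolve_left hatomic
  rw [Formula.realize_not, realize_reducedProduct_iff_eventually hθ, not_eventually]
  exact h.mono fun i hi => Formula.realize_not.1 hi

theorem IsHornList.exists_realize_reducedProduct [F.NeBot] {l : List (L.Formula β)}
    (hl : IsHornList l) {x : β → ∀ i, M i} (h : ∀ᶠ i in F, ∃ χ ∈ l, χ.Realize fun b => x b i) :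
    ∃ χ ∈ l, χ.Realize fun b => (x b : F.Product M) := by
  by_cases hneg : ∃ χ ∈ l, ¬ BoundedFormula.IsAtomic χ ∧ ∃ᶠ i in F, χ.Realize fun b => x b i
  · obtain ⟨χ, hχl, hχ, hfreq⟩ := hneg
    exact ⟨χ, hχl, IsLiteral.realize_reducedProduct_of_frequently (hl.1 χ hχl) hχ hfreq⟩
  · push Not at hneg
    have hfail : ∀ᶠ i in F, ∀ χ ∈ {χ | χ ∈ l}, ¬ BoundedFormula.IsAtomic χ →
        ¬ χ.Realize fun b => x b i :=
      (eventually_all_finite l.finite_toSet).2 fun χ hχl =>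
        eventually_imp_distrib_left.2 fun hχ => hneg χ hχl hχ
    have hpos : ∀ᶠ i in F, ∃ χ ∈ l, BoundedFormula.IsAtomic χ ∧ χ.Realize fun b => x b i := by
      filter_upwards [h, hfail] with i ⟨χ, hχl, hχ⟩ hfail
      exact ⟨χ, hχl, by_contra fun hatomic => hfail χ hχl hatomic hχ, hχ⟩
    obtain ⟨-, χ, hχl, hχ, -⟩ := hpos.exists
    refine ⟨χ, hχl, (realize_reducedProduct_iff_eventually hχ x).2 ?_⟩
    filter_upwards [hpos] with i ⟨χ', hχl', hχ', hreal⟩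
    rwa [hl.eq_of_isAtomic hχl hχl' hχ hχ']

theorem IsBasicHorn.satAll_reducedProduct [F.NeBot] {φ : L.Formula β} (hφ : IsBasicHorn φ)
    (h : ∀ᶠ i in F, SatAll (M i) φ) : SatAll (F.Product M) φ := by
  obtain ⟨ψ, l, rfl, hl⟩ := hφ
  intro v
  obtain ⟨x, rfl⟩ : ∃ x : β → ∀ i, M i, (fun b => (x b : F.Product M)) = v :=
    ⟨fun b => (v b).out, funext fun b => (v b).out_eq⟩
  exact realize_orList.2 <| hl.exists_realize_reducedProduct <|
    h.mono fun i hi => realize_orList.1 (hi fun b => x b i)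

end ReducedProduct

section Soundness

variable {K : Set (SStruct.{u} L)} {Γ : Set (L.Formula ℕ)}

theorem AxiomatizedBy.closedUnderIso (hK : AxiomatizedBy L K Γ) : ClosedUnderIso L K := by
  rintro M hM N ⟨e⟩
  rw [hK] at hM ⊢
  exact fun φ hφ v => (StrongHomClass.realize_formula e.symm φ).1 (hM φ hφ (e.symm ∘ v))

theorem AxiomatizedBy.closedUnderSubstructures (hK : AxiomatizedBy L K Γ)
    (hΓ : ∀ φ ∈ Γ, BoundedFormula.IsQF φ) : ClosedUnderSubstructures L K := by
  intro M hM S hS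
  rw [hK] at hM ⊢
  exact fun φ hφ => (hM φ hφ).of_embedding (hΓ φ hφ) S.subtype

theorem AxiomatizedBy.closedUnderReducedProducts (hK : AxiomatizedBy L K Γ)
    (hΓ : ∀ φ ∈ Γ, IsBasicHorn φ) : ClosedUnderReducedProducts L K := by
  intro ι F hF B hB
  rw [hK]
  exact fun φ hφ => (hΓ φ hφ).satAll_reducedProduct <|
    Eventually.of_forall fun i => (hK (B i)).1 (hB i) φ hφ

end Soundness

section Completeness

/-- The basic Horn theory of the class `K` in the variables `α`: the basic Horn formulas valid in
every member of `K`. It is the canonical candidate for an axiomatization of `K`. -/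
def basicHornTheory (α : Type u') (K : Set (SStruct.{u} L)) : Set (L.Formula α) :=
  {φ | IsBasicHorn φ ∧ ∀ M ∈ K, SatAll (M : Type u) φ}

variable {K : Set (SStruct.{u} L)} {A : Type w'} [L.Structure A]

theorem satAll_of_mem_basicHornTheory [Nonempty A] {α : Type*}
    (hA : ∀ φ ∈ basicHornTheory ℕ K, SatAll A φ) {φ : L.Formula α}
    (hφ : φ ∈ basicHornTheory α K) : SatAll A φ := by
  classical
  obtain ⟨g, hg⟩ := countable_iff_exists_injOn.1
    (BoundedFormula.freeVarFinset φ).countable_toSet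
  exact (satAll_relabel_iff hg).1 <|
    hA _ ⟨hφ.1.relabel g, fun M hM => (satAll_relabel_iff hg).2 (hφ.2 M hM)⟩

theorem exists_mem_realize_and_not_realize {α : Type*}
    (hA : ∀ φ ∈ basicHornTheory α K, SatAll A φ) {v : α → A} {l : List (L.Formula α)}
    (hl : ∀ φ ∈ l, BoundedFormula.IsAtomic φ ∧ φ.Realize v) {ψ : L.Formula α}
    (hψ : IsLiteral ψ) (hψv : ¬ ψ.Realize v) :
    ∃ B ∈ K, ∃ w : α → (B : Type u), (∀ φ ∈ l, φ.Realize w) ∧ ¬ ψ.Realize w := by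
  by_contra! hK
  have hmem : orList ψ (l.map Formula.not) ∈ basicHornTheory α K :=
    ⟨⟨ψ, _, rfl, hψ.isHornList_cons_map_not fun φ hφ => (hl φ hφ).1⟩,
      fun B hB w => realize_orList_map_not.2 (hK B hB w)⟩
  exact hψv (realize_orList_map_not.1 (hA _ hmem v) fun φ hφ => (hl φ hφ).2)

theorem exists_reducedProduct_realize_iff {α : Type u'} [Nonempty α]
    (hA : ∀ φ ∈ basicHornTheory α K, SatAll A φ) (v : α → A) :
    ∃ (ι : Type max u' v w) (F : Filter ι) (_ : F.NeBot) (B : ι → SStruct.{u} L),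
      (∀ i, B i ∈ K) ∧ ∃ x : α → F.Product fun i => (B i : Type u),
        ∀ φ : L.Formula α, BoundedFormula.IsAtomic φ → (φ.Realize x ↔ φ.Realize v) := by
  let P := {φ : L.Formula α // BoundedFormula.IsAtomic φ ∧ φ.Realize v}
  let N := {ψ : L.Formula α // IsLiteral ψ ∧ ¬ ψ.Realize v}
  have : Nonempty N := by
    let a : L.Term α := var (Classical.arbitrary α)
    exact ⟨(a.equal a).not, Or.inr ⟨_, BoundedFormula.IsAtomic.equal _ _, rfl⟩,
      by simp [Formula.realize_not, Formula.realize_equal]⟩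
  have hsep (i : Finset P × N) : ∃ B ∈ K, ∃ w : α → (B : Type u),
      (∀ φ ∈ i.1, φ.1.Realize w) ∧ ¬ i.2.1.Realize w := by
    simpa only [List.forall_mem_map, Finset.mem_toList] using
      exists_mem_realize_and_not_realize hA (l := i.1.toList.map Subtype.val)
        (List.forall_mem_map.2 fun φ _ => φ.2) i.2.2.1 i.2.2.2
  choose B hBK x hpos hneg using hsep
  let F : Filter (Finset P × N) := comap Prod.fst atTop
  refine ⟨_, F, NeBot.comap_of_surj inferInstance Prod.fst_surjective, B, hBK, _,
    fun φ hφ => (realize_reducedProduct_iff_eventually hφ fun a i => x i a).trans ?_⟩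
  rw [eventually_comap]
  constructor
  · intro h
    by_contra hφv
    obtain ⟨S, hS⟩ := h.exists
    exact hneg (S, ⟨φ, Or.inl hφ, hφv⟩) (hS (S, ⟨φ, Or.inl hφ, hφv⟩) rfl)
  · intro hφv
    filter_upwards [eventually_ge_atTop {⟨φ, hφ, hφv⟩}] with S hS i hi
    exact hpos i ⟨φ, hφ, hφv⟩ (hi ▸ Finset.singleton_subset_iff.1 hS)

/-- Robinson's method of diagrams: an assignment in `M`, indexed by `A`, that satisfies exactly the
atomic formulas true in `A` is an embedding. -/
def embeddingOfRealizeIff {M : Type*} [L.Structure M] (f : A → M)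
    (hf : ∀ φ : L.Formula A, BoundedFormula.IsAtomic φ → (φ.Realize f ↔ φ.Realize id)) :
    A ↪[L] M where
  toFun := f
  inj' a b hab := by
    have h := hf ((var a : L.Term A).equal (var b)) (BoundedFormula.IsAtomic.equal _ _)
    rw [Formula.realize_equal, Formula.realize_equal] at h
    exact h.1 hab
  map_fun' {n} g x := by
    have h := hf ((var (funMap g x) : L.Term A).equal (func g fun k => var (x k)))
      (BoundedFormula.IsAtomic.equal _ _)
    rw [Formula.realize_equal, Formula.realize_equal] at h
    exact h.2 rfl
  map_rel' {n} r x := by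
    have h := hf (r.formula fun k => var (x k)) (BoundedFormula.IsAtomic.rel _ _)
    rwa [Formula.realize_rel, Formula.realize_rel] at h

theorem exists_embedding_reducedProduct [Nonempty A]
    (hA : ∀ φ ∈ basicHornTheory ℕ K, SatAll A φ) :
    ∃ (ι : Type max w' v w) (F : Filter ι) (_ : F.NeBot) (B : ι → SStruct.{u} L),
      (∀ i, B i ∈ K) ∧ Nonempty (A ↪[L] F.Product fun i => (B i : Type u)) := by
  obtain ⟨ι, F, hF, B, hBK, x, hx⟩ :=
    exists_reducedProduct_realize_iff (fun _ => satAll_of_mem_basicHornTheory hA) (id : A → A)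
  exact ⟨ι, F, hF, B, hBK, ⟨embeddingOfRealizeIff x hx⟩⟩

theorem mem_of_embedding (hiso : ClosedUnderIso L K) (hsub : ClosedUnderSubstructures L K)
    {M N : SStruct.{u} L} (hM : M ∈ K) (e : (N : Type u) ↪[L] (M : Type u)) : N ∈ K :=
  have hrange : Nonempty e.toHom.range := N.nonempty.map e.equivRange
  hiso _ (hsub M hM e.toHom.range hrange) N ⟨e.equivRange.symm⟩

end Completeness

end BasicHorn

-- The reduced product that `A` embeds into is indexed by formulas with variables in `A`, which live
-- in the universe `max u v w` when `A` does.
theorem basicHorn_axiomatizable_iff_general {L : FirstOrder.Language.{v, w}}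
    (K : Set (SStruct.{max u v w} L)) :
    (∃ Γ : Set (L.Formula ℕ), (∀ φ ∈ Γ, IsBasicHorn φ) ∧ AxiomatizedBy L K Γ) ↔
      (ClosedUnderIso L K ∧ ClosedUnderSubstructures L K ∧
        ClosedUnderReducedProducts L K) := by
  constructor
  · rintro ⟨Γ, hΓ, hK⟩
    exact ⟨hK.closedUnderIso, hK.closedUnderSubstructures fun φ hφ => (hΓ φ hφ).isQF,
      hK.closedUnderReducedProducts hΓ⟩
  · rintro ⟨hiso, hsub, hprod⟩
    refine ⟨basicHornTheory ℕ K, fun φ hφ => hφ.1, fun A => ⟨fun hA φ hφ => hφ.2 A hA, ?_⟩⟩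
    intro hA
    obtain ⟨ι, F, hF, B, hBK, ⟨e⟩⟩ := exists_embedding_reducedProduct hA
    exact mem_of_embedding hiso hsub (hprod ι F hF B hBK) e

/-- Theorem 5 (Hodges 9.4.7): a class of structures is axiomatized by a set of basic Horn
formulas iff it is closed under isomorphisms, substructures, and reduced products. -/
theorem basicHorn_axiomatizable_iff {L : FirstOrder.Language.{u, u}}
    (K : Set (SStruct.{u} L)) :
    (∃ Γ : Set (L.Formula ℕ), (∀ φ ∈ Γ, IsBasicHorn φ) ∧ AxiomatizedBy L K Γ) ↔
      (ClosedUnderIso L K ∧ ClosedUnderSubstructures L K ∧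
        ClosedUnderReducedProducts L K) :=
  basicHorn_axiomatizable_iff_general.{u, u, u} K

end ZFHorn
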